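/- arXiv:2009.09375 — 2 statements merged into one kernel-verified Lean document; each statement's English description precedes it below -/
import Mathlib

section
/- Let χ be a complex character of G with χ ≠ 1_G and χ|_K = 1_K, and define the linear map Θ_χ : ℂP̃₀ → ℂP̃₁ by Θ_χ y = e_χ(y ∨ u) for y ∈ P̃₀. Then there is a unique H_χ ∈ P̃_{a,b−1,0} such that for every y ∈ P̃₀ one has Θ_χ y ≠ 0 if and only if y ⊆ H_χ. Moreover, Θ_χ restricts to a linear bijection from ℂP(x,H_χ) onto M(χ), and, with L₁, L₂, R₁, R₂, E*_{i,j} the matrices attached to P(x,H_χ) with respect to x, the following hold on ℂP(x,H_χ) for all 0 ≤ i ≤ a and 0 ≤ j ≤ b−1: L̃₁Θ_χ = qΘ_χL₁; L̃₂Θ_χ = qΘ_χL₂; L̃₃Θ_χ = 0; R̃₁Θ_χ = Θ_χR₁; R̃₂Θ_χ = Θ_χR₂; R̃₃Θ_χ = 0; Ẽ*_{i,j,0}Θ_χ = Ẽ*_{i,b,0}Θ_χ = Ẽ*_{i,b,1}Θ_χ = 0; Ẽ*_{i,j,1}Θ_χ = Θ_χE*_{i,j}. -/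
open Module

/-- The q-Pochhammer symbol `(q;q)_n = ∏_{ℓ=0}^{n-1} (1 - q^ℓ)`. -/
noncomputable def qPoch (q : ℂ) (n : ℕ) : ℂ := ∏ l ∈ Finset.range n, (1 - q ^ l)

/-- The q-Pochhammer symbol with an integer index (junk value for negative index). -/
noncomputable def qPochZ (q : ℂ) (n : ℤ) : ℂ := qPoch q n.toNat

/-- The Gaussian binomial coefficient `[m, n]_q`, with the convention that it
vanishes unless `0 ≤ n ≤ m`. -/
noncomputable def qGauss (q : ℂ) (m n : ℤ) : ℂ :=
  if 0 ≤ n ∧ n ≤ m then qPoch q m.toNat / (qPoch q n.toNat * qPoch q (m - n).toNat) else 0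

section Twisted

variable (F : Type) [Field F] [Fintype F] (n : ℕ)

/-- Membership of `y` in `P̃_{i,j,k}` (with respect to `x ⊆ H`). -/
def PtMem (x H : Submodule F (Fin n → F)) (i j k : ℤ) (y : Submodule F (Fin n → F)) : Prop :=
  (finrank F ↥(x ⊓ y) : ℤ) = i ∧ (finrank F ↥(H ⊓ y) : ℤ) = i + j ∧
    (finrank F y : ℤ) = i + j + k

open Classical in
/-- The diagonal matrix `Ẽ*_{i,j,k}`. -/
noncomputable def EstarT (x H : Submodule F (Fin n → F)) (i j k : ℤ) :
    Matrix (Submodule F (Fin n → F)) (Submodule F (Fin n → F)) ℂ :=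
  Matrix.diagonal fun y => if PtMem F n x H i j k y then 1 else 0

open Classical in
/-- The lowering matrix `L̃₁`. -/
noncomputable def LoneT (x H : Submodule F (Fin n → F)) :
    Matrix (Submodule F (Fin n → F)) (Submodule F (Fin n → F)) ℂ :=
  fun y z => if y ≤ z ∧ finrank F y + 1 = finrank F z ∧
    finrank F ↥(x ⊓ y) + 1 = finrank F ↥(x ⊓ z) ∧
    finrank F ↥(H ⊓ y) + 1 = finrank F ↥(H ⊓ z) then 1 else 0

open Classical in
/-- The lowering matrix `L̃₂`. -/
noncomputable def LtwoT (x H : Submodule F (Fin n → F)) :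
    Matrix (Submodule F (Fin n → F)) (Submodule F (Fin n → F)) ℂ :=
  fun y z => if y ≤ z ∧ finrank F y + 1 = finrank F z ∧
    finrank F ↥(x ⊓ y) = finrank F ↥(x ⊓ z) ∧
    finrank F ↥(H ⊓ y) + 1 = finrank F ↥(H ⊓ z) then 1 else 0

open Classical in
/-- The lowering matrix `L̃₃`. -/
noncomputable def LthreeT (x H : Submodule F (Fin n → F)) :
    Matrix (Submodule F (Fin n → F)) (Submodule F (Fin n → F)) ℂ :=
  fun y z => if y ≤ z ∧ finrank F y + 1 = finrank F z ∧
    finrank F ↥(x ⊓ y) = finrank F ↥(x ⊓ z) ∧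
    finrank F ↥(H ⊓ y) = finrank F ↥(H ⊓ z) then 1 else 0

open Classical in
/-- The raising matrix `R̃₁`. -/
noncomputable def RoneT (x H : Submodule F (Fin n → F)) :
    Matrix (Submodule F (Fin n → F)) (Submodule F (Fin n → F)) ℂ :=
  fun y z => if z ≤ y ∧ finrank F z + 1 = finrank F y ∧
    finrank F ↥(x ⊓ z) + 1 = finrank F ↥(x ⊓ y) ∧
    finrank F ↥(H ⊓ z) + 1 = finrank F ↥(H ⊓ y) then 1 else 0

open Classical in
/-- The raising matrix `R̃₂`. -/
noncomputable def RtwoT (x H : Submodule F (Fin n → F)) :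
    Matrix (Submodule F (Fin n → F)) (Submodule F (Fin n → F)) ℂ :=
  fun y z => if z ≤ y ∧ finrank F z + 1 = finrank F y ∧
    finrank F ↥(x ⊓ z) = finrank F ↥(x ⊓ y) ∧
    finrank F ↥(H ⊓ z) + 1 = finrank F ↥(H ⊓ y) then 1 else 0

open Classical in
/-- The raising matrix `R̃₃`. -/
noncomputable def RthreeT (x H : Submodule F (Fin n → F)) :
    Matrix (Submodule F (Fin n → F)) (Submodule F (Fin n → F)) ℂ :=
  fun y z => if z ≤ y ∧ finrank F z + 1 = finrank F y ∧
    finrank F ↥(x ⊓ z) = finrank F ↥(x ⊓ y) ∧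
    finrank F ↥(H ⊓ z) = finrank F ↥(H ⊓ y) then 1 else 0

open Classical in
/-- The diagonal matrix `E*_{i,j}` of `P(x', H')`, viewed inside `Mat_{P̃}(ℂ)`
(supported on the subspaces of `H'`). -/
noncomputable def EstarRel (x' H' : Submodule F (Fin n → F)) (i j : ℤ) :
    Matrix (Submodule F (Fin n → F)) (Submodule F (Fin n → F)) ℂ :=
  Matrix.diagonal fun y => if y ≤ H' ∧ (finrank F ↥(x' ⊓ y) : ℤ) = i ∧
    (finrank F y : ℤ) = i + j then 1 else 0

open Classical in
/-- The lowering matrix `L₁` of `P(x', H')`, viewed inside `Mat_{P̃}(ℂ)`. -/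
noncomputable def LoneRel (x' H' : Submodule F (Fin n → F)) :
    Matrix (Submodule F (Fin n → F)) (Submodule F (Fin n → F)) ℂ :=
  fun y z => if z ≤ H' ∧ y ≤ z ∧ finrank F y + 1 = finrank F z ∧
    finrank F ↥(x' ⊓ y) + 1 = finrank F ↥(x' ⊓ z) then 1 else 0

open Classical in
/-- The lowering matrix `L₂` of `P(x', H')`, viewed inside `Mat_{P̃}(ℂ)`. -/
noncomputable def LtwoRel (x' H' : Submodule F (Fin n → F)) :
    Matrix (Submodule F (Fin n → F)) (Submodule F (Fin n → F)) ℂ :=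
  fun y z => if z ≤ H' ∧ y ≤ z ∧ finrank F y + 1 = finrank F z ∧
    finrank F ↥(x' ⊓ y) = finrank F ↥(x' ⊓ z) then 1 else 0

open Classical in
/-- The raising matrix `R₁` of `P(x', H')`, viewed inside `Mat_{P̃}(ℂ)`. -/
noncomputable def RoneRel (x' H' : Submodule F (Fin n → F)) :
    Matrix (Submodule F (Fin n → F)) (Submodule F (Fin n → F)) ℂ :=
  fun y z => if y ≤ H' ∧ z ≤ y ∧ finrank F z + 1 = finrank F y ∧
    finrank F ↥(x' ⊓ z) + 1 = finrank F ↥(x' ⊓ y) then 1 else 0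

open Classical in
/-- The raising matrix `R₂` of `P(x', H')`, viewed inside `Mat_{P̃}(ℂ)`. -/
noncomputable def RtwoRel (x' H' : Submodule F (Fin n → F)) :
    Matrix (Submodule F (Fin n → F)) (Submodule F (Fin n → F)) ℂ :=
  fun y z => if y ≤ H' ∧ z ≤ y ∧ finrank F z + 1 = finrank F y ∧
    finrank F ↥(x' ⊓ z) = finrank F ↥(x' ⊓ y) then 1 else 0

end Twisted

section GroupPart

variable (F : Type) [Field F] [Fintype F] (n : ℕ)

/-- The subgroup `G` of `SL(Ṽ)` consisting of the elements fixing every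
vector of the hyperplane `H`. -/
noncomputable def Gsub (H : Submodule F (Fin n → F)) :
    Subgroup ((Fin n → F) ≃ₗ[F] (Fin n → F)) where
  carrier := {g | LinearEquiv.det g = 1 ∧ ∀ v ∈ H, g v = v}
  one_mem' := ⟨map_one _, fun v _ => rfl⟩
  mul_mem' := by
    rintro g h ⟨hg1, hg2⟩ ⟨hh1, hh2⟩
    refine ⟨by rw [map_mul, hg1, hh1, one_mul], fun v hv => ?_⟩
    show g (h v) = v
    rw [hh2 v hv, hg2 v hv]
  inv_mem' := by
    rintro g ⟨hg1, hg2⟩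
    refine ⟨by rw [map_inv, hg1, inv_one], fun v hv => ?_⟩
    show g.symm v = v
    conv_lhs => rw [← hg2 v hv]
    exact g.symm_apply_apply v

/-- The image of a subspace under a linear automorphism. -/
noncomputable def smap (g : (Fin n → F) ≃ₗ[F] (Fin n → F))
    (y : Submodule F (Fin n → F)) : Submodule F (Fin n → F) :=
  Submodule.map (g : (Fin n → F) →ₗ[F] (Fin n → F)) y

/-- The `χ`-homogeneous component of the span of the basis vectors indexed by `S`. -/
noncomputable def Mcomp (H : Submodule F (Fin n → F)) (χ : Gsub F n H →* ℂ)
    (S : Set (Submodule F (Fin n → F))) : Submodule ℂ (Submodule F (Fin n → F) → ℂ) where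
  carrier := {v | (∀ y, y ∉ S → v y = 0) ∧
      ∀ g : Gsub F n H, ∀ y : Submodule F (Fin n → F),
        v (smap F n ((g⁻¹ : Gsub F n H) : (Fin n → F) ≃ₗ[F] (Fin n → F)) y) = χ g * v y}
  zero_mem' := ⟨fun _ _ => rfl, fun g y => by simp⟩
  add_mem' := by
    rintro v w ⟨hv1, hv2⟩ ⟨hw1, hw2⟩
    refine ⟨fun y hy => by simp [hv1 y hy, hw1 y hy], fun g y => ?_⟩
    simp only [Pi.add_apply, hv2 g y, hw2 g y]
    ring
  smul_mem' := by
    rintro c v ⟨hv1, hv2⟩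
    refine ⟨fun y hy => by simp [hv1 y hy], fun g y => ?_⟩
    simp only [Pi.smul_apply, hv2 g y, smul_eq_mul]
    ring

open Classical in
/-- The characteristic vector (as a function) of a single subspace `y`. -/
noncomputable def delta (y z : Submodule F (Fin n → F)) : ℂ :=
  if z = y then 1 else 0

open Classical in
/-- The idempotent `e_χ = q^{-(a+b)} Σ_{g ∈ G} χ(g⁻¹) g` applied to a vector of `ℂP̃`. -/
noncomputable def echi (H : Submodule F (Fin n → F)) [Fintype (Gsub F n H)]
    (χ : Gsub F n H →* ℂ) (v : Submodule F (Fin n → F) → ℂ) :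
    Submodule F (Fin n → F) → ℂ := fun y =>
  ((Fintype.card F : ℂ) ^ (n - 1))⁻¹ *
    ∑ g : Gsub F n H, χ g⁻¹ *
      v (smap F n ((g⁻¹ : Gsub F n H) : (Fin n → F) ≃ₗ[F] (Fin n → F)) y)

open Classical in
/-- The linear map `Θ_χ : ℂP̃₀ → ℂP̃₁`, `Θ_χ y = e_χ(y ∨ u)`, as a matrix
(extended by zero on the basis vectors outside `ℂP̃₀`). -/
noncomputable def Theta (H : Submodule F (Fin n → F)) [Fintype (Gsub F n H)]
    (χ : Gsub F n H →* ℂ) (u : Submodule F (Fin n → F)) :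
    Matrix (Submodule F (Fin n → F)) (Submodule F (Fin n → F)) ℂ :=
  fun z y => if y ≤ H then echi F n H χ (delta F n (y ⊔ u)) z else 0

end GroupPart

/-- The condition `(g - id)(Ṽ) ⊆ x` defining the subgroup `K` of `G`. -/
def memK (F : Type) [Field F] [Fintype F] (n : ℕ) (x : Submodule F (Fin n → F))
    (g : (Fin n → F) ≃ₗ[F] (Fin n → F)) : Prop :=
  ∀ v : Fin n → F, g v - v ∈ x

section Helpers

set_option linter.unusedSectionVars false

/-- Auxiliary setup: `H` is the kernel of `f`, and `f u0 = 1`. -/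
structure HypSetup {F : Type} [Field F] {n : ℕ} (H : Submodule F (Fin n → F))
    (f : (Fin n → F) →ₗ[F] F) (u0 : Fin n → F) : Prop where
  hf : ∀ w, w ∈ H ↔ f w = 0
  hu : f u0 = 1

variable {F : Type} [Field F] [Fintype F] {n : ℕ} {H : Submodule F (Fin n → F)}
  {f : (Fin n → F) →ₗ[F] F} {u0 : Fin n → F}

theorem G_apply (S : HypSetup H f u0) (g : Gsub F n H) (w : Fin n → F) :
    g.1 w = w + f w • (g.1 u0 - u0) := by
  have h1 : g.1 (w - f w • u0) = w - f w • u0 := by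
    apply g.2.2
    rw [S.hf]
    simp [S.hu]
  rw [map_sub, map_smul] at h1
  rw [smul_sub]
  linear_combination h1

theorem G_diff_mem (S : HypSetup H f u0) (g : Gsub F n H) : g.1 u0 - u0 ∈ H := by
  have h2 : (g.1 : (Fin n → F) →ₗ[F] (Fin n → F)) =
      LinearMap.transvection f (g.1 u0 - u0) := by
    ext1 i
    ext1
    simp only [LinearMap.comp_apply, LinearEquiv.coe_coe]
    rw [G_apply S g, LinearMap.transvection.apply]
  have h3 := g.2.1
  have h4 : LinearMap.det (g.1 : (Fin n → F) →ₗ[F] (Fin n → F)) = 1 := by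
    rw [← LinearEquiv.coe_det, h3]; rfl
  rw [h2, LinearMap.transvection.det] at h4
  rw [S.hf]
  linear_combination h4

theorem G_f (S : HypSetup H f u0) (g : Gsub F n H) (w : Fin n → F) : f (g.1 w) = f w := by
  rw [G_apply S g w, map_add, map_smul, (S.hf _).1 (G_diff_mem S g)]
  simp

theorem G_exists (S : HypSetup H f u0) {h : Fin n → F} (hh : h ∈ H) :
    ∃ g : Gsub F n H, ∀ w, g.1 w = w + f w • h := by
  have h0 := (S.hf h).1 hh
  refine ⟨⟨LinearEquiv.transvection h0, ?_, ?_⟩, ?_⟩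
  · exact LinearEquiv.transvection.det_eq_one h0
  · intro v hv
    have := (S.hf v).1 hv
    rw [LinearEquiv.transvection.apply, this]
    simp
  · intro w
    exact LinearEquiv.transvection.apply h0 w

theorem G_ext (S : HypSetup H f u0) {g g' : Gsub F n H} (h : g.1 u0 = g'.1 u0) : g = g' := by
  apply Subtype.ext
  apply LinearEquiv.ext
  intro w
  rw [G_apply S g, G_apply S g', h]

theorem mem_smap (g : Gsub F n H) (z : Submodule F (Fin n → F)) (w : Fin n → F) :
    w ∈ smap F n ((g⁻¹ : Gsub F n H) : (Fin n → F) ≃ₗ[F] (Fin n → F)) z ↔ g.1 w ∈ z := by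
  unfold smap
  rw [Submodule.mem_map_equiv]
  rfl

theorem inf_smap (g : Gsub F n H) (z : Submodule F (Fin n → F)) :
    H ⊓ smap F n ((g⁻¹ : Gsub F n H) : (Fin n → F) ≃ₗ[F] (Fin n → F)) z = H ⊓ z := by
  ext w
  simp only [Submodule.mem_inf, mem_smap]
  constructor
  · rintro ⟨h1, h2⟩
    rw [g.2.2 w h1] at h2
    exact ⟨h1, h2⟩
  · rintro ⟨h1, h2⟩
    rw [g.2.2 w h1]
    exact ⟨h1, h2⟩

theorem inf_sup_span (S : HypSetup H f u0) {y : Submodule F (Fin n → F)} (hy : y ≤ H)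
    {w : Fin n → F} (hw : f w = 1) : H ⊓ (y ⊔ Submodule.span F {w}) = y := by
  apply le_antisymm
  · rintro v ⟨h1, h2⟩
    obtain ⟨p, hp, r, hr, rfl⟩ := Submodule.mem_sup.1 h2
    obtain ⟨c, rfl⟩ := Submodule.mem_span_singleton.1 hr
    have h3 := (S.hf _).1 h1
    rw [map_add, map_smul, hw, (S.hf _).1 (hy hp)] at h3
    have : c = 0 := by simpa using h3
    simpa [this] using hp
  · exact le_inf hy le_sup_left

theorem inf_sup_of_mem (S : HypSetup H f u0) {z : Submodule F (Fin n → F)}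
    {w : Fin n → F} (hw : f w = 1) (hz : w ∈ z) : (H ⊓ z) ⊔ Submodule.span F {w} = z := by
  apply le_antisymm
  · refine sup_le inf_le_right ?_
    rw [Submodule.span_singleton_le_iff_mem]
    exact hz
  · intro v hv
    refine Submodule.mem_sup.2 ⟨v - f v • w, ⟨?_, ?_⟩, f v • w, ?_, by abel⟩
    · rw [SetLike.mem_coe, S.hf]
      simp [hw]
    · exact z.sub_mem hv (z.smul_mem _ hz)
    · exact Submodule.smul_mem _ _ (Submodule.mem_span_singleton_self w)

theorem exists_G_mem (S : HypSetup H f u0) {z : Submodule F (Fin n → F)} (hz : ¬ z ≤ H) :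
    ∃ g : Gsub F n H, g.1 u0 ∈ z := by
  obtain ⟨v, hv, hvH⟩ := Set.not_subset.1 hz
  have h0 : f v ≠ 0 := fun h => hvH ((S.hf v).2 h)
  have hm : (f v)⁻¹ • v - u0 ∈ H := by
    rw [S.hf]; simp [S.hu, h0]
  obtain ⟨g, hg⟩ := G_exists S hm
  refine ⟨g, ?_⟩
  rw [hg, S.hu]
  simpa using z.smul_mem (f v)⁻¹ hv

theorem G_mem_not_le (S : HypSetup H f u0) {z : Submodule F (Fin n → F)} {g : Gsub F n H}
    (hg : g.1 u0 ∈ z) : ¬ z ≤ H := by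
  intro h
  have := (S.hf _).1 (h hg)
  rw [G_f S, S.hu] at this
  exact one_ne_zero this

theorem finrank_of_mem (S : HypSetup H f u0) {z : Submodule F (Fin n → F)}
    {w : Fin n → F} (hw : f w = 1) (hz : w ∈ z) : finrank F z = finrank F ↥(H ⊓ z) + 1 := by
  have h1 : w ∉ H ⊓ z := by
    rintro ⟨h, -⟩
    have := (S.hf _).1 h
    rw [hw] at this
    exact one_ne_zero this
  rw [← Submodule.finrank_sup_span_singleton h1, inf_sup_of_mem S hw hz]

theorem finrank_not_le (S : HypSetup H f u0) {z : Submodule F (Fin n → F)} (hz : ¬ z ≤ H) :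
    finrank F z = finrank F ↥(H ⊓ z) + 1 := by
  obtain ⟨g, hg⟩ := exists_G_mem S hz
  exact finrank_of_mem S (by rw [G_f S, S.hu]) hg

theorem finrank_inf_of_le {z : Submodule F (Fin n → F)} (hz : z ≤ H) :
    finrank F ↥(H ⊓ z) = finrank F z := by
  rw [inf_eq_right.2 hz]

theorem smap_eq_iff (S : HypSetup H f u0) (g : Gsub F n H) (z : Submodule F (Fin n → F))
    {y : Submodule F (Fin n → F)} (hy : y ≤ H) :
    smap F n ((g⁻¹ : Gsub F n H) : (Fin n → F) ≃ₗ[F] (Fin n → F)) z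
      = y ⊔ Submodule.span F {u0} ↔ g.1 u0 ∈ z ∧ y = H ⊓ z := by
  constructor
  · intro h
    constructor
    · rw [← mem_smap, h]
      exact Submodule.mem_sup_right (Submodule.mem_span_singleton_self u0)
    · rw [← inf_smap g z, h, inf_sup_span S hy S.hu]
  · rintro ⟨h1, h2⟩
    rw [← mem_smap] at h1
    rw [h2, ← inf_smap g z, inf_sup_of_mem S S.hu h1]

open Classical in
/-- The character sum attached to `z`. -/
noncomputable def cSum [Fintype (Gsub F n H)] (χ : Gsub F n H →* ℂ) (u0 : Fin n → F)
    (z : Submodule F (Fin n → F)) : ℂ :=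
  ∑ g : Gsub F n H, if g.1 u0 ∈ z then χ g⁻¹ else 0

variable [Fintype (Gsub F n H)] {χ : Gsub F n H →* ℂ}

open Classical in
theorem echi_delta (S : HypSetup H f u0) {y : Submodule F (Fin n → F)} (hy : y ≤ H)
    (z : Submodule F (Fin n → F)) :
    echi F n H χ (delta F n (y ⊔ Submodule.span F {u0})) z =
      ((Fintype.card F : ℂ) ^ (n - 1))⁻¹ * if y = H ⊓ z then cSum χ u0 z else 0 := by
  unfold echi delta cSum
  congr 1
  simp only [smap_eq_iff S _ z hy]
  by_cases h : y = H ⊓ z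
  · simp [h]
  · simp [h]

open Classical in
theorem theta_mulVec [Fintype (Submodule F (Fin n → F))]
    (S : HypSetup H f u0) (v : Submodule F (Fin n → F) → ℂ) (z : Submodule F (Fin n → F)) :
    (Theta F n H χ (Submodule.span F {u0})).mulVec v z =
      ((Fintype.card F : ℂ) ^ (n - 1))⁻¹ * cSum χ u0 z * v (H ⊓ z) := by
  unfold Matrix.mulVec dotProduct
  rw [Finset.sum_eq_single (H ⊓ z)]
  · simp only [Theta]
    rw [if_pos inf_le_left, echi_delta S inf_le_left, if_pos rfl]
  · intro y _ hy
    simp only [Theta]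
    split_ifs with h
    · rw [echi_delta S h, if_neg hy]; simp
    · simp
  · simp

theorem cSum_of_le (S : HypSetup H f u0) {z : Submodule F (Fin n → F)} (hz : z ≤ H) :
    cSum χ u0 z = 0 := by
  unfold cSum
  apply Finset.sum_eq_zero
  intro g _
  rw [if_neg]
  intro h
  exact G_mem_not_le S h hz

theorem char_inv_ne_one {g : Gsub F n H} (h : χ g ≠ 1) : χ g⁻¹ ≠ 1 := by
  intro h1
  apply h
  have := map_mul χ g g⁻¹
  rw [mul_inv_cancel, map_one, h1, mul_one] at this
  exact this.symm

theorem mul_apply_u0 (S : HypSetup H f u0) (k g : Gsub F n H) :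
    (k * g).1 u0 = g.1 u0 + (k.1 u0 - u0) := by
  change k.1 (g.1 u0) = _
  rw [G_apply S k (g.1 u0), G_f S, S.hu, one_smul]

theorem cSum_eq_zero (S : HypSetup H f u0) {z : Submodule F (Fin n → F)}
    {k : Gsub F n H} (hk : k.1 u0 - u0 ∈ z) (hχ : χ k ≠ 1) : cSum χ u0 z = 0 := by
  have h1 : cSum χ u0 z = χ k⁻¹ * cSum χ u0 z := by
    conv_lhs => unfold cSum
    rw [← Equiv.sum_comp (Equiv.mulLeft k)]
    unfold cSum
    rw [Finset.mul_sum]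
    apply Finset.sum_congr rfl
    intro g _
    have h2 : (Equiv.mulLeft k g).1 u0 ∈ z ↔ g.1 u0 ∈ z := by
      rw [Equiv.coe_mulLeft, mul_apply_u0 S, Submodule.add_mem_iff_left z hk]
    have h3 : χ (Equiv.mulLeft k g)⁻¹ = χ k⁻¹ * χ g⁻¹ := by
      rw [Equiv.coe_mulLeft, mul_inv_rev, map_mul, mul_comm]
    by_cases h : g.1 u0 ∈ z
    · rw [if_pos (h2.2 h), if_pos h, h3]
    · rw [if_neg (fun hh => h (h2.1 hh)), if_neg h, mul_zero]
  have h2 : (χ k⁻¹ - 1) * cSum χ u0 z = 0 := by linear_combination -h1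
  rcases mul_eq_zero.1 h2 with h | h
  · exact absurd (sub_eq_zero.1 h) (char_inv_ne_one hχ)
  · exact h

open Classical in
theorem cSum_smap (g : Gsub F n H) (z : Submodule F (Fin n → F)) :
    cSum χ u0 (smap F n ((g⁻¹ : Gsub F n H) : (Fin n → F) ≃ₗ[F] (Fin n → F)) z) =
      χ g * cSum χ u0 z := by
  have h : cSum χ u0 z = ∑ k : Gsub F n H, if (g * k).1 u0 ∈ z then χ (g * k)⁻¹ else 0 := by
    unfold cSum
    exact (Equiv.sum_comp (Equiv.mulLeft g)
      (fun k : Gsub F n H => if k.1 u0 ∈ z then χ k⁻¹ else 0)).symm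
  rw [h, cSum, Finset.mul_sum]
  apply Finset.sum_congr rfl
  intro k _
  have h1 : χ g * χ (g * k)⁻¹ = χ k⁻¹ := by
    rw [mul_inv_rev, map_mul, mul_left_comm, ← map_mul, mul_inv_cancel, map_one, mul_one]
  by_cases h : g.1 (k.1 u0) ∈ z
  · rw [if_pos ((mem_smap g z _).2 h), if_pos (show (g * k).1 u0 ∈ z from h), h1]
  · rw [if_neg (fun hh => h ((mem_smap g z _).1 hh)),
      if_neg (show ¬ (g * k).1 u0 ∈ z from h), mul_zero]

open Classical in
theorem cSum_val (S : HypSetup H f u0) {z : Submodule F (Fin n → F)} {g0 : Gsub F n H}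
    (hg0 : g0.1 u0 ∈ z) (hz : ∀ k : Gsub F n H, k.1 u0 - u0 ∈ H ⊓ z → χ k = 1) :
    cSum χ u0 z = (Fintype.card F : ℂ) ^ finrank F ↥(H ⊓ z) * χ g0⁻¹ := by
  have h0 : cSum χ u0 z = χ g0⁻¹ * ∑ k : Gsub F n H, if k.1 u0 - u0 ∈ H ⊓ z then (1 : ℂ) else 0 := by
    unfold cSum
    rw [← Equiv.sum_comp (Equiv.mulRight g0), Finset.mul_sum]
    apply Finset.sum_congr rfl
    intro k _
    have h1 : (Equiv.mulRight g0 k).1 u0 ∈ z ↔ k.1 u0 - u0 ∈ H ⊓ z := by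
      rw [Equiv.coe_mulRight, mul_apply_u0 S, Submodule.add_mem_iff_right z hg0, Submodule.mem_inf,
        and_iff_right (G_diff_mem S k)]
    by_cases h : k.1 u0 - u0 ∈ H ⊓ z
    · rw [if_pos (h1.2 h), if_pos h, Equiv.coe_mulRight, mul_inv_rev, map_mul, mul_one]
      have h2 : χ k⁻¹ = 1 := by
        by_contra hc
        exact char_inv_ne_one hc (by rw [inv_inv]; exact hz k h)
      rw [h2, mul_one]
    · rw [if_neg (fun hh => h (h1.1 hh)), if_neg h, mul_zero]
  rw [h0, mul_comm]
  congr 1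
  rw [Finset.sum_boole]
  have hc : (Finset.univ.filter fun k : Gsub F n H => k.1 u0 - u0 ∈ H ⊓ z).card =
      Nat.card ↥(H ⊓ z) := by
    rw [← Nat.card_eq_finsetCard]
    refine Nat.card_congr (Equiv.ofBijective
      (fun k => ⟨k.1.1 u0 - u0, (Finset.mem_filter.1 k.2).2⟩) ⟨?_, ?_⟩)
    · intro k k' h
      have := congrArg Subtype.val h
      simp only [sub_left_inj] at this
      exact Subtype.ext (G_ext S this)
    · rintro ⟨h, hh⟩
      obtain ⟨g, hg⟩ := G_exists S hh.1
      have : g.1 u0 - u0 = h := by rw [hg, S.hu]; simp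
      refine ⟨⟨g, ?_⟩, Subtype.ext this⟩
      rw [Finset.mem_filter]
      exact ⟨Finset.mem_univ _, by rw [this]; exact hh⟩
  rw [hc, Module.natCard_eq_pow_finrank (K := F), Nat.card_eq_fintype_card]
  push_cast
  rfl

variable [Fintype (Submodule F (Fin n → F))]

open Classical in
/-- Uniform version of the lowering matrices of `P̃`. -/
noncomputable def LgenT (P : ℕ → ℕ → Prop) (x H : Submodule F (Fin n → F)) :
    Matrix (Submodule F (Fin n → F)) (Submodule F (Fin n → F)) ℂ :=
  fun y z => if y ≤ z ∧ finrank F y + 1 = finrank F z ∧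
    P (finrank F ↥(x ⊓ y)) (finrank F ↥(x ⊓ z)) ∧
    finrank F ↥(H ⊓ y) + 1 = finrank F ↥(H ⊓ z) then 1 else 0

open Classical in
/-- Uniform version of the lowering matrices of `P(x', H')`. -/
noncomputable def LgenRel (P : ℕ → ℕ → Prop) (x' H' : Submodule F (Fin n → F)) :
    Matrix (Submodule F (Fin n → F)) (Submodule F (Fin n → F)) ℂ :=
  fun y z => if z ≤ H' ∧ y ≤ z ∧ finrank F y + 1 = finrank F z ∧
    P (finrank F ↥(x' ⊓ y)) (finrank F ↥(x' ⊓ z)) then 1 else 0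

open Classical in
/-- Uniform version of the raising matrices of `P̃`. -/
noncomputable def RgenT (P : ℕ → ℕ → Prop) (x H : Submodule F (Fin n → F)) :
    Matrix (Submodule F (Fin n → F)) (Submodule F (Fin n → F)) ℂ :=
  fun y z => if z ≤ y ∧ finrank F z + 1 = finrank F y ∧
    P (finrank F ↥(x ⊓ z)) (finrank F ↥(x ⊓ y)) ∧
    finrank F ↥(H ⊓ z) + 1 = finrank F ↥(H ⊓ y) then 1 else 0

open Classical in
/-- Uniform version of the raising matrices of `P(x', H')`. -/
noncomputable def RgenRel (P : ℕ → ℕ → Prop) (x' H' : Submodule F (Fin n → F)) :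
    Matrix (Submodule F (Fin n → F)) (Submodule F (Fin n → F)) ℂ :=
  fun y z => if y ≤ H' ∧ z ≤ y ∧ finrank F z + 1 = finrank F y ∧
    P (finrank F ↥(x' ⊓ z)) (finrank F ↥(x' ⊓ y)) then 1 else 0

theorem LoneT_eq (x H : Submodule F (Fin n → F)) :
    LoneT F n x H = LgenT (fun i j => i + 1 = j) x H := by
  funext y z; simp only [LoneT, LgenT]; congr

theorem LtwoT_eq (x H : Submodule F (Fin n → F)) :
    LtwoT F n x H = LgenT (fun i j => i = j) x H := by
  funext y z; simp only [LtwoT, LgenT]; congr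

theorem RoneT_eq (x H : Submodule F (Fin n → F)) :
    RoneT F n x H = RgenT (fun i j => i + 1 = j) x H := by
  funext y z; simp only [RoneT, RgenT]; congr

theorem RtwoT_eq (x H : Submodule F (Fin n → F)) :
    RtwoT F n x H = RgenT (fun i j => i = j) x H := by
  funext y z; simp only [RtwoT, RgenT]; congr

theorem LoneRel_eq (x H : Submodule F (Fin n → F)) :
    LoneRel F n x H = LgenRel (fun i j => i + 1 = j) x H := by
  funext y z; simp only [LoneRel, LgenRel]; congr

theorem LtwoRel_eq (x H : Submodule F (Fin n → F)) :
    LtwoRel F n x H = LgenRel (fun i j => i = j) x H := by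
  funext y z; simp only [LtwoRel, LgenRel]; congr

theorem RoneRel_eq (x H : Submodule F (Fin n → F)) :
    RoneRel F n x H = RgenRel (fun i j => i + 1 = j) x H := by
  funext y z; simp only [RoneRel, RgenRel]; congr

theorem RtwoRel_eq (x H : Submodule F (Fin n → F)) :
    RtwoRel F n x H = RgenRel (fun i j => i = j) x H := by
  funext y z; simp only [RtwoRel, RgenRel]; congr

theorem x_inf_H {x : Submodule F (Fin n → F)} (hxH : x ≤ H) (z : Submodule F (Fin n → F)) :
    x ⊓ (H ⊓ z) = x ⊓ z := by
  rw [← inf_assoc, inf_eq_left.2 hxH]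

variable {Hχ : Submodule F (Fin n → F)}

theorem cSum_zero_of_not_le (S : HypSetup H f u0)
    (hP : ∀ y ≤ H, y ≤ Hχ ↔ ∀ k : Gsub F n H, k.1 u0 - u0 ∈ y → χ k = 1)
    {z : Submodule F (Fin n → F)} (hz : ¬ H ⊓ z ≤ Hχ) : cSum χ u0 z = 0 := by
  rw [hP _ inf_le_left] at hz
  push Not at hz
  obtain ⟨k, hk, hk1⟩ := hz
  exact cSum_eq_zero S hk.2 hk1

theorem le_of_finrank_inf {z : Submodule F (Fin n → F)}
    (hz : finrank F z ≤ finrank F ↥(H ⊓ z)) : z ≤ H := by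
  have : H ⊓ z = z := Submodule.eq_of_le_of_finrank_le inf_le_right hz
  exact inf_eq_right.1 this

open Classical in
theorem L_comm (S : HypSetup H f u0) (hχH : Hχ ≤ H)
    (hP : ∀ y ≤ H, y ≤ Hχ ↔ ∀ k : Gsub F n H, k.1 u0 - u0 ∈ y → χ k = 1)
    {x : Submodule F (Fin n → F)} (hxH : x ≤ H) (P : ℕ → ℕ → Prop)
    (v : Submodule F (Fin n → F) → ℂ) (hv : ∀ y, ¬ y ≤ Hχ → v y = 0) :
    (LgenT P x H).mulVec ((Theta F n H χ (Submodule.span F {u0})).mulVec v) =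
      (Fintype.card F : ℂ) • (Theta F n H χ (Submodule.span F {u0})).mulVec
        ((LgenRel P x Hχ).mulVec v) := by
  funext z
  rw [Pi.smul_apply, theta_mulVec S]
  unfold Matrix.mulVec dotProduct
  change ∑ z', LgenT P x H z z' * (Theta F n H χ (Submodule.span F {u0})).mulVec v z' = _
  simp only [theta_mulVec S]
  by_cases hz : z ≤ H
  · rw [cSum_of_le S hz, mul_zero, zero_mul, smul_zero]
    apply Finset.sum_eq_zero
    intro z' _
    simp only [LgenT]
    split_ifs with h
    · have : z' ≤ H := by
        apply le_of_finrank_inf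
        have := finrank_inf_of_le hz
        omega
      rw [cSum_of_le S this]; simp
    · simp
  obtain ⟨g, hg⟩ := exists_G_mem S hz
  have hfg : f (g.1 u0) = 1 := by rw [G_f S, S.hu]
  set q : ℂ := (Fintype.card F : ℂ)
  set Q : ℂ := (q ^ (n - 1))⁻¹
  rw [smul_eq_mul, Finset.mul_sum, Finset.mul_sum]
  let A : Submodule F (Fin n → F) → Prop := fun z' => (z ≤ z' ∧ finrank F z + 1 = finrank F z' ∧
    P (finrank F ↥(x ⊓ z)) (finrank F ↥(x ⊓ z')) ∧
    finrank F ↥(H ⊓ z) + 1 = finrank F ↥(H ⊓ z')) ∧ H ⊓ z' ≤ Hχ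
  let B : Submodule F (Fin n → F) → Prop := fun y' => y' ≤ Hχ ∧ H ⊓ z ≤ y' ∧
    finrank F ↥(H ⊓ z) + 1 = finrank F y' ∧
    P (finrank F ↥(x ⊓ (H ⊓ z))) (finrank F ↥(x ⊓ y'))
  have hL : ∀ z', LgenT P x H z z' * (Q * cSum χ u0 z' * v (H ⊓ z')) =
      if A z' then Q * cSum χ u0 z' * v (H ⊓ z') else 0 := by
    intro z'
    by_cases h1 : H ⊓ z' ≤ Hχ
    · simp only [LgenT, A, h1, and_true, ite_mul, one_mul, zero_mul]
    · rw [if_neg (fun h => h1 h.2), hv _ h1]; simp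
  have hR : ∀ y', q * (Q * cSum χ u0 z * (LgenRel P x Hχ (H ⊓ z) y' * v y')) =
      if B y' then q * (Q * cSum χ u0 z * v y') else 0 := by
    intro y'
    by_cases h : B y'
    · simp only [LgenRel]
      rw [if_pos h, if_pos h, one_mul]
    · simp only [LgenRel]
      rw [if_neg h, if_neg h]; simp
  rw [Finset.sum_congr rfl (fun z' _ => hL z'), ← Finset.sum_filter]
  rw [Finset.sum_congr rfl (fun y' _ => hR y'), ← Finset.sum_filter]
  have hsup : ∀ z', z ≤ z' → (H ⊓ z') ⊔ z = z' := by
    intro z' h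
    apply le_antisymm (sup_le inf_le_right h)
    conv_lhs => rw [← inf_sup_of_mem S hfg (h hg)]
    apply sup_le_sup_left
    rw [Submodule.span_singleton_le_iff_mem]
    exact hg
  have hinf : ∀ y', y' ≤ H → H ⊓ z ≤ y' → H ⊓ (y' ⊔ z) = y' := by
    intro y' h1 h2
    rw [inf_comm, sup_inf_assoc_of_le z h1, inf_comm z H, sup_eq_left.2 h2]
  refine Finset.sum_nbij' (fun z' => H ⊓ z') (fun y' => y' ⊔ z) ?_ ?_ ?_ ?_ ?_
  · intro z' h
    rw [Finset.mem_filter] at h ⊢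
    obtain ⟨_, ⟨h1, h2, h3, h4⟩, h5⟩ := h
    refine ⟨Finset.mem_univ _, h5, inf_le_inf_left _ h1, h4, ?_⟩
    rw [x_inf_H hxH, x_inf_H hxH]; exact h3
  · intro y' h
    rw [Finset.mem_filter] at h ⊢
    obtain ⟨_, h1, h2, h3, h4⟩ := h
    have h5 := hinf y' (h1.trans hχH) h2
    have h6 : finrank F ↥(H ⊓ z) + 1 = finrank F ↥(H ⊓ (y' ⊔ z)) := by rw [h5]; exact h3
    refine ⟨Finset.mem_univ _, ⟨le_sup_right, ?_, ?_, h6⟩, ?_⟩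
    · rw [finrank_of_mem S hfg hg, h6,
        finrank_of_mem S hfg (show g.1 u0 ∈ y' ⊔ z from Submodule.mem_sup_right hg)]
    · rw [← x_inf_H hxH z, ← x_inf_H hxH (y' ⊔ z), h5]; exact h4
    · rw [h5]; exact h1
  · intro z' h
    rw [Finset.mem_filter] at h
    exact hsup z' h.2.1.1
  · intro y' h
    rw [Finset.mem_filter] at h
    exact hinf y' (h.2.1.trans hχH) h.2.2.1
  · intro z' h
    rw [Finset.mem_filter] at h
    obtain ⟨_, ⟨h1, h2, h3, h4⟩, h5⟩ := h
    have h6 := (hP _ inf_le_left).1 h5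
    have h7 : ∀ k : Gsub F n H, k.1 u0 - u0 ∈ H ⊓ z → χ k = 1 :=
      fun k hk => h6 k (inf_le_inf_left H h1 hk)
    rw [cSum_val S hg h7, cSum_val S (h1 hg) h6, ← h4, pow_succ]
    ring

open Classical in
theorem R_comm (S : HypSetup H f u0)
    (hP : ∀ y ≤ H, y ≤ Hχ ↔ ∀ k : Gsub F n H, k.1 u0 - u0 ∈ y → χ k = 1)
    {x : Submodule F (Fin n → F)} (hxH : x ≤ H) (P : ℕ → ℕ → Prop)
    (v : Submodule F (Fin n → F) → ℂ) :
    (RgenT P x H).mulVec ((Theta F n H χ (Submodule.span F {u0})).mulVec v) =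
      (Theta F n H χ (Submodule.span F {u0})).mulVec ((RgenRel P x Hχ).mulVec v) := by
  funext z
  rw [theta_mulVec S]
  unfold Matrix.mulVec dotProduct
  change ∑ z', RgenT P x H z z' * (Theta F n H χ (Submodule.span F {u0})).mulVec v z' = _
  simp only [theta_mulVec S]
  set Q : ℂ := ((Fintype.card F : ℂ) ^ (n - 1))⁻¹
  let B : Submodule F (Fin n → F) → Prop := fun y' => y' ≤ H ⊓ z ∧
    finrank F y' + 1 = finrank F ↥(H ⊓ z) ∧
    P (finrank F ↥(x ⊓ y')) (finrank F ↥(x ⊓ (H ⊓ z)))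
  have key : ∀ g : Gsub F n H, g.1 u0 ∈ z →
      ∑ z', RgenT P x H z z' * (if g.1 u0 ∈ z' then v (H ⊓ z') else 0) =
        ∑ y', if B y' then v y' else 0 := by
    intro g hg
    have hfg : f (g.1 u0) = 1 := by rw [G_f S, S.hu]
    have hL : ∀ z', RgenT P x H z z' * (if g.1 u0 ∈ z' then v (H ⊓ z') else 0) =
        if (z' ≤ z ∧ finrank F z' + 1 = finrank F z ∧
    P (finrank F ↥(x ⊓ z')) (finrank F ↥(x ⊓ z)) ∧
    finrank F ↥(H ⊓ z') + 1 = finrank F ↥(H ⊓ z)) ∧ g.1 u0 ∈ z' then v (H ⊓ z') else 0 := by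
      intro z'
      by_cases h1 : g.1 u0 ∈ z'
      · simp only [RgenT, h1, and_true, if_true, ite_mul, one_mul, zero_mul]
      · simp [h1]
    rw [Finset.sum_congr rfl (fun z' _ => hL z'), ← Finset.sum_filter, ← Finset.sum_filter]
    refine Finset.sum_nbij' (fun z' => H ⊓ z') (fun y' => y' ⊔ Submodule.span F {g.1 u0})
      ?_ ?_ ?_ ?_ ?_
    · intro z' h
      rw [Finset.mem_filter] at h ⊢
      obtain ⟨_, ⟨h1, h2, h3, h4⟩, h5⟩ := h
      refine ⟨Finset.mem_univ _, inf_le_inf_left _ h1, h4, ?_⟩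
      rw [x_inf_H hxH, x_inf_H hxH]; exact h3
    · intro y' h
      rw [Finset.mem_filter] at h ⊢
      obtain ⟨_, h1, h2, h3⟩ := h
      have h5 := inf_sup_span S (h1.trans inf_le_left) hfg
      have hm : g.1 u0 ∈ y' ⊔ Submodule.span F {g.1 u0} :=
        Submodule.mem_sup_right (Submodule.mem_span_singleton_self _)
      refine ⟨Finset.mem_univ _, ⟨?_, ?_, ?_, ?_⟩, hm⟩
      · refine sup_le (h1.trans inf_le_right) ?_
        rw [Submodule.span_singleton_le_iff_mem]
        exact hg
      · rw [finrank_of_mem S hfg hm, finrank_of_mem S hfg hg, h5, h2]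
      · rw [← x_inf_H hxH z, ← x_inf_H hxH (y' ⊔ _), h5]; exact h3
      · rw [h5]; exact h2
    · intro z' h
      rw [Finset.mem_filter] at h
      exact inf_sup_of_mem S hfg h.2.2
    · intro y' h
      rw [Finset.mem_filter] at h
      exact inf_sup_span S (h.2.1.trans inf_le_left) hfg
    · intro z' h
      rfl
  have hLHS : ∑ z', RgenT P x H z z' * (Q * cSum χ u0 z' * v (H ⊓ z')) =
      Q * cSum χ u0 z * ∑ y', if B y' then v y' else 0 := by
    have e1 : ∀ z', RgenT P x H z z' * (Q * cSum χ u0 z' * v (H ⊓ z')) =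
        ∑ g : Gsub F n H, Q * χ g⁻¹ *
          (RgenT P x H z z' * (if g.1 u0 ∈ z' then v (H ⊓ z') else 0)) := by
      intro z'
      unfold cSum
      rw [Finset.mul_sum, Finset.sum_mul, Finset.mul_sum]
      apply Finset.sum_congr rfl
      intro g _
      by_cases h : g.1 u0 ∈ z'
      · simp only [h, if_true]; ring
      · simp [h]
    rw [Finset.sum_congr rfl (fun z' _ => e1 z'), Finset.sum_comm]
    generalize (∑ y', if B y' then v y' else 0) = T at key ⊢
    conv_rhs => unfold cSum
    rw [Finset.mul_sum, Finset.sum_mul]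
    apply Finset.sum_congr rfl
    intro g _
    rw [← Finset.mul_sum]
    by_cases h : g.1 u0 ∈ z
    · rw [key g h, if_pos h]
    · rw [if_neg h, mul_zero, zero_mul]
      convert mul_zero _
      apply Finset.sum_eq_zero
      intro z' _
      simp only [RgenT]
      split_ifs with h1 h2
      · exact absurd (h1.1 h2) h
      all_goals simp
  rw [hLHS]
  by_cases hz : H ⊓ z ≤ Hχ
  · congr 1
    apply Finset.sum_congr rfl
    intro y' _
    simp only [RgenRel, hz, true_and, B, ite_mul, one_mul, zero_mul]
  · rw [cSum_zero_of_not_le S hP hz]; simp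

theorem card_pow_inv_ne_zero (m : ℕ) : ((Fintype.card F : ℂ) ^ m)⁻¹ ≠ 0 := by
  apply inv_ne_zero
  apply pow_ne_zero
  exact_mod_cast Fintype.card_ne_zero

theorem cSum_ne_zero (S : HypSetup H f u0) (hχH : Hχ ≤ H)
    (hP : ∀ y ≤ H, y ≤ Hχ ↔ ∀ k : Gsub F n H, k.1 u0 - u0 ∈ y → χ k = 1)
    {y : Submodule F (Fin n → F)} (hy : y ≤ Hχ) :
    cSum χ u0 (y ⊔ Submodule.span F {u0}) = (Fintype.card F : ℂ) ^ finrank F y := by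
  have hyH := hy.trans hχH
  have h1 := inf_sup_span S hyH S.hu
  rw [cSum_val (g0 := 1) S, h1]
  · simp
  · exact Submodule.mem_sup_right (Submodule.mem_span_singleton_self u0)
  · rw [h1]; exact (hP y hyH).1 hy

theorem echi_ne_zero_iff (S : HypSetup H f u0) (hχH : Hχ ≤ H)
    (hP : ∀ y ≤ H, y ≤ Hχ ↔ ∀ k : Gsub F n H, k.1 u0 - u0 ∈ y → χ k = 1)
    {y : Submodule F (Fin n → F)} (hy : y ≤ H) :
    echi F n H χ (delta F n (y ⊔ Submodule.span F {u0})) ≠ 0 ↔ y ≤ Hχ := by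
  constructor
  · intro h
    by_contra hc
    apply h
    funext z
    rw [echi_delta S hy]
    split_ifs with h1
    · rw [cSum_zero_of_not_le S hP (by rw [← h1]; exact hc)]; simp
    · simp
  · intro h h0
    have h1 := congrFun h0 (y ⊔ Submodule.span F {u0})
    rw [echi_delta S hy, if_pos (inf_sup_span S hy S.hu).symm, cSum_ne_zero S hχH hP h] at h1
    have hq : (Fintype.card F : ℂ) ≠ 0 := by exact_mod_cast Fintype.card_ne_zero
    exact mul_ne_zero (card_pow_inv_ne_zero _) (pow_ne_zero _ hq) h1

theorem theta_inj (S : HypSetup H f u0) (hχH : Hχ ≤ H)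
    (hP : ∀ y ≤ H, y ≤ Hχ ↔ ∀ k : Gsub F n H, k.1 u0 - u0 ∈ y → χ k = 1)
    (v w : Submodule F (Fin n → F) → ℂ) (hv : ∀ y, ¬ y ≤ Hχ → v y = 0)
    (hw : ∀ y, ¬ y ≤ Hχ → w y = 0)
    (h : (Theta F n H χ (Submodule.span F {u0})).mulVec v =
      (Theta F n H χ (Submodule.span F {u0})).mulVec w) : v = w := by
  funext y
  by_cases hy : y ≤ Hχ
  · have h1 := congrFun h (y ⊔ Submodule.span F {u0})
    rw [theta_mulVec S, theta_mulVec S, cSum_ne_zero S hχH hP hy,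
      inf_sup_span S (hy.trans hχH) S.hu] at h1
    have hq : (Fintype.card F : ℂ) ≠ 0 := by exact_mod_cast Fintype.card_ne_zero
    exact mul_left_cancel₀ (mul_ne_zero (card_pow_inv_ne_zero _) (pow_ne_zero _ hq)) h1
  · rw [hv y hy, hw y hy]

theorem theta_mem (S : HypSetup H f u0) (v : Submodule F (Fin n → F) → ℂ) :
    (Theta F n H χ (Submodule.span F {u0})).mulVec v ∈ Mcomp F n H χ {y | ¬ y ≤ H} := by
  constructor
  · intro y hy
    have : y ≤ H := by simpa using hy
    rw [theta_mulVec S, cSum_of_le S this]; simp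
  · intro g y
    rw [theta_mulVec S, theta_mulVec S, inf_smap, cSum_smap]
    ring

theorem smap_of_diff_mem (S : HypSetup H f u0) {z : Submodule F (Fin n → F)} {k : Gsub F n H}
    (hk : k.1 u0 - u0 ∈ z) :
    smap F n ((k⁻¹ : Gsub F n H) : (Fin n → F) ≃ₗ[F] (Fin n → F)) z = z := by
  ext w
  rw [mem_smap, G_apply S k w, Submodule.add_mem_iff_left z (z.smul_mem _ hk)]

open Classical in
theorem theta_surj (S : HypSetup H f u0)
    (hP : ∀ y ≤ H, y ≤ Hχ ↔ ∀ k : Gsub F n H, k.1 u0 - u0 ∈ y → χ k = 1)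
    (m : Submodule F (Fin n → F) → ℂ) (hm : m ∈ Mcomp F n H χ {y | ¬ y ≤ H}) :
    ∃ v : Submodule F (Fin n → F) → ℂ, (∀ y, ¬ y ≤ Hχ → v y = 0) ∧
      (Theta F n H χ (Submodule.span F {u0})).mulVec v = m := by
  obtain ⟨hm1, hm2⟩ := hm
  have hq : (Fintype.card F : ℂ) ≠ 0 := by exact_mod_cast Fintype.card_ne_zero
  refine ⟨fun y => if y ≤ Hχ then (Fintype.card F : ℂ) ^ (n - 1) *
    ((Fintype.card F : ℂ) ^ finrank F y)⁻¹ * m (y ⊔ Submodule.span F {u0}) else 0,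
    fun y hy => if_neg hy, ?_⟩
  funext z
  rw [theta_mulVec S]
  by_cases hz : z ≤ H
  · rw [cSum_of_le S hz, hm1 z (by simpa using hz)]; simp
  by_cases hz2 : H ⊓ z ≤ Hχ
  · obtain ⟨g, hg⟩ := exists_G_mem S hz
    have h6 := (hP _ inf_le_left).1 hz2
    have h7 := (smap_eq_iff S g z (y := H ⊓ z) inf_le_left).2 ⟨hg, rfl⟩
    have h8 := hm2 g z
    rw [h7] at h8
    rw [if_pos hz2, cSum_val S hg h6, h8]
    have h9 : χ g⁻¹ * χ g = 1 := by rw [← map_mul, inv_mul_cancel, map_one]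
    have e1 := inv_mul_cancel₀ (pow_ne_zero (n - 1) hq)
    have e2 := mul_inv_cancel₀ (pow_ne_zero (finrank F ↥(H ⊓ z)) hq)
    calc _ = (((Fintype.card F : ℂ) ^ (n - 1))⁻¹ * (Fintype.card F : ℂ) ^ (n - 1)) *
          ((Fintype.card F : ℂ) ^ finrank F ↥(H ⊓ z) *
            ((Fintype.card F : ℂ) ^ finrank F ↥(H ⊓ z))⁻¹) * (χ g⁻¹ * χ g) * m z := by ring
      _ = m z := by rw [h9, e1, e2]; ring
  · rw [if_neg hz2, mul_zero]
    rw [hP _ inf_le_left] at hz2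
    push Not at hz2
    obtain ⟨k, hk, hk1⟩ := hz2
    have h8 := hm2 k z
    rw [smap_of_diff_mem S hk.2] at h8
    have h9 : (χ k - 1) * m z = 0 := by linear_combination -h8
    rcases mul_eq_zero.1 h9 with h | h
    · exact absurd (sub_eq_zero.1 h) hk1
    · exact h.symm

theorem finrank_smap (g : Gsub F n H) (z : Submodule F (Fin n → F)) :
    finrank F ↥(smap F n ((g⁻¹ : Gsub F n H) : (Fin n → F) ≃ₗ[F] (Fin n → F)) z) =
      finrank F z := by
  unfold smap
  exact LinearEquiv.finrank_map_eq _ z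

theorem inf_smap_of_le {x : Submodule F (Fin n → F)} (hxH : x ≤ H)
    (g : Gsub F n H) (z : Submodule F (Fin n → F)) :
    x ⊓ smap F n ((g⁻¹ : Gsub F n H) : (Fin n → F) ≃ₗ[F] (Fin n → F)) z = x ⊓ z := by
  rw [← x_inf_H hxH, inf_smap, x_inf_H hxH]

/-- The permutation of subspaces induced by an element of `G`. -/
noncomputable def smapEquiv (g : Gsub F n H) :
    Submodule F (Fin n → F) ≃ Submodule F (Fin n → F) where
  toFun := smap F n ((g⁻¹ : Gsub F n H) : (Fin n → F) ≃ₗ[F] (Fin n → F))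
  invFun := smap F n (((g⁻¹)⁻¹ : Gsub F n H) : (Fin n → F) ≃ₗ[F] (Fin n → F))
  left_inv z := by
    ext w
    rw [mem_smap, mem_smap]
    change g.1 (g.1.symm w) ∈ z ↔ _
    rw [LinearEquiv.apply_symm_apply]
  right_inv z := by
    ext w
    rw [mem_smap, mem_smap]
    change g.1.symm (g.1 w) ∈ z ↔ _
    rw [LinearEquiv.symm_apply_apply]

theorem L3_zero (S : HypSetup H f u0) (hχ1 : χ ≠ 1)
    {x : Submodule F (Fin n → F)} (hxH : x ≤ H)
    (m : Submodule F (Fin n → F) → ℂ) (hm : m ∈ Mcomp F n H χ {y | ¬ y ≤ H}) :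
    (LthreeT F n x H).mulVec m = 0 := by
  obtain ⟨hm1, hm2⟩ := hm
  funext z
  unfold Matrix.mulVec dotProduct
  by_cases hz : z ≤ H
  · obtain ⟨k, hk⟩ : ∃ k, χ k ≠ 1 := by
      by_contra hc
      push Not at hc
      exact hχ1 (MonoidHom.ext hc)
    have h1 : ∑ z', LthreeT F n x H z z' * m z' =
        χ k * ∑ z', LthreeT F n x H z z' * m z' := by
      conv_lhs => rw [← Equiv.sum_comp (smapEquiv k)]
      rw [Finset.mul_sum]
      apply Finset.sum_congr rfl
      intro z' _
      have e1 : LthreeT F n x H z (smapEquiv k z') = LthreeT F n x H z z' := by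
        have hle : z ≤ smapEquiv k z' ↔ z ≤ z' := by
          have := inf_smap k z'
          constructor
          · intro h
            have h2 : z ≤ H ⊓ smap F n ((k⁻¹ : Gsub F n H) : (Fin n → F) ≃ₗ[F] (Fin n → F)) z' :=
              le_inf hz h
            rw [this] at h2
            exact h2.trans inf_le_right
          · intro h
            have h2 : z ≤ H ⊓ z' := le_inf hz h
            rw [← this] at h2
            exact h2.trans inf_le_right
        have ea : finrank F ↥(smapEquiv k z') = finrank F z' := finrank_smap k z'
        have eb : finrank F ↥(x ⊓ smapEquiv k z') = finrank F ↥(x ⊓ z') :=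
          congrArg (fun y : Submodule F (Fin n → F) => finrank F y) (inf_smap_of_le hxH k z')
        have ec : finrank F ↥(H ⊓ smapEquiv k z') = finrank F ↥(H ⊓ z') :=
          congrArg (fun y : Submodule F (Fin n → F) => finrank F y) (inf_smap k z')
        simp only [LthreeT]
        by_cases hc : z ≤ z' ∧ finrank F z + 1 = finrank F z' ∧
            finrank F ↥(x ⊓ z) = finrank F ↥(x ⊓ z') ∧
            finrank F ↥(H ⊓ z) = finrank F ↥(H ⊓ z')
        · rw [if_pos hc, if_pos (by rw [hle, ea, eb, ec]; exact hc)]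
        · rw [if_neg hc, if_neg (by rw [hle, ea, eb, ec]; exact hc)]
      have e2 : m (smapEquiv k z') = χ k * m z' := hm2 k z'
      rw [e1, e2]; ring
    have h2 : (χ k - 1) * ∑ z', LthreeT F n x H z z' * m z' = 0 := by linear_combination -h1
    rcases mul_eq_zero.1 h2 with h | h
    · exact absurd (sub_eq_zero.1 h) hk
    · exact h
  · apply Finset.sum_eq_zero
    intro z' _
    simp only [LthreeT]
    split_ifs with h
    · exfalso
      have h1 := finrank_not_le S hz
      have h2 := finrank_not_le S (fun h' => hz (h.1.trans h'))
      omega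
    · simp

theorem R3_zero (S : HypSetup H f u0) (x : Submodule F (Fin n → F))
    (m : Submodule F (Fin n → F) → ℂ) (hm : m ∈ Mcomp F n H χ {y | ¬ y ≤ H}) :
    (RthreeT F n x H).mulVec m = 0 := by
  obtain ⟨hm1, hm2⟩ := hm
  funext z
  unfold Matrix.mulVec dotProduct
  apply Finset.sum_eq_zero
  intro z' _
  simp only [RthreeT]
  split_ifs with h
  · have h1 : z' ≤ H := by
      by_contra hc
      have h2 := finrank_not_le S hc
      have h3 := finrank_not_le S (fun h' => hc (h.1.trans h'))
      omega
    rw [hm1 z' (by simpa using h1), mul_zero]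
  · simp


theorem exists_ker_submodule {M : Type} [AddCommGroup M] [Module F M] [Module.Finite F M]
    (ψ : AddChar M ℂ) (hψ : ψ ≠ 1) :
    ∃ N : Submodule F M, finrank F N + 1 = finrank F M ∧
      ∀ y : Submodule F M, y ≤ N ↔ ∀ m ∈ y, ψ m = 1 := by
  let N : Submodule F M :=
    { carrier := {m | ∀ c : F, ψ (c • m) = 1}
      zero_mem' := by intro c; simp
      add_mem' := by
        intro p r hp hr c
        rw [smul_add, AddChar.map_add_eq_mul, hp c, hr c, one_mul]
      smul_mem' := by
        intro d p hp c
        rw [smul_smul]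
        exact hp _ }
  obtain ⟨m1, hm1⟩ : ∃ m, ψ m ≠ 1 := by
    by_contra hc
    push Not at hc
    exact hψ (DFunLike.ext _ _ fun m => by rw [hc m]; rfl)
  let A : M → AddChar F ℂ := fun m =>
    { toFun := fun c => ψ (c • m)
      map_zero_eq_one' := by simp
      map_add_eq_mul' := by intro c d; rw [add_smul, AddChar.map_add_eq_mul] }
  have hA : ∀ m c, A m c = ψ (c • m) := fun _ _ => rfl
  have hprim : (A m1).IsPrimitive := by
    apply AddChar.IsPrimitive.of_ne_one
    intro h
    apply hm1
    have := congrArg (fun φ : AddChar F ℂ => φ 1) h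
    simpa [hA] using this
  have hinj := AddChar.to_mulShift_inj_of_isPrimitive hprim
  have hbij : Function.Bijective (A m1).mulShift := by
    rw [Fintype.bijective_iff_injective_and_card]
    exact ⟨hinj, by rw [AddChar.card_eq]⟩
  have hm1N : m1 ∉ N := by
    intro h
    apply hm1
    simpa using h 1
  refine ⟨N, ?_, ?_⟩
  · rw [← Submodule.finrank_sup_span_singleton hm1N]
    have : N ⊔ Submodule.span F {m1} = ⊤ := by
      rw [eq_top_iff]
      intro m _
      obtain ⟨c, hc⟩ := hbij.2 (A m)
      refine Submodule.mem_sup.2 ⟨m - c • m1, ?_, c • m1,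
        Submodule.smul_mem _ _ (Submodule.mem_span_singleton_self _), by abel⟩
      intro d
      have h1 : A m1 (c * d) = A m d := by rw [← hc, AddChar.mulShift_apply]
      rw [hA, hA] at h1
      rw [smul_sub, AddChar.map_sub_eq_div, smul_smul, mul_comm d c, h1]
      apply div_self
      intro h0
      have := AddChar.map_add_eq_mul ψ (d • m) (-(d • m))
      rw [add_neg_cancel, AddChar.map_zero_eq_one, h0, zero_mul] at this
      exact one_ne_zero this
    rw [this, finrank_top]
  · intro y
    constructor
    · intro h m hm
      simpa using h hm 1
    · intro h m hm c
      exact h _ (y.smul_mem c hm)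

theorem exists_Hχ (S : HypSetup H f u0) (hχ1 : χ ≠ 1) :
    ∃ Hχ : Submodule F (Fin n → F), Hχ ≤ H ∧ finrank F Hχ + 1 = finrank F H ∧
      ∀ y ≤ H, y ≤ Hχ ↔ ∀ k : Gsub F n H, k.1 u0 - u0 ∈ y → χ k = 1 := by
  choose T hT using fun h : H => G_exists S h.2
  have hTu : ∀ h : H, (T h).1 u0 - u0 = h.1 := by
    intro h
    rw [hT, S.hu]; simp
  have hT0 : T 0 = 1 := by
    apply G_ext S
    rw [hT]
    simp
  have hTadd : ∀ h h' : H, T (h + h') = T h * T h' := by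
    intro h h'
    apply G_ext S
    rw [mul_apply_u0 S, hTu, hT, hT, S.hu]
    simp only [one_smul, Submodule.coe_add]
    abel
  have hTk : ∀ k : Gsub F n H, T ⟨k.1 u0 - u0, G_diff_mem S k⟩ = k := by
    intro k
    apply G_ext S
    rw [hT, S.hu]
    simp
  let ψ : AddChar H ℂ :=
    { toFun := fun h => χ (T h)
      map_zero_eq_one' := by rw [hT0, map_one]
      map_add_eq_mul' := by intro h h'; rw [hTadd, map_mul] }
  have hψa : ∀ h, ψ h = χ (T h) := fun _ => rfl
  have hψ : ψ ≠ 1 := by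
    intro h
    apply hχ1
    ext k
    have h1 : ψ ⟨k.1 u0 - u0, G_diff_mem S k⟩ = 1 := by rw [h]; rfl
    rw [hψa, hTk] at h1
    rw [h1]; rfl
  obtain ⟨N, hN1, hN2⟩ := exists_ker_submodule (F := F) ψ hψ
  refine ⟨N.map H.subtype, Submodule.map_subtype_le H N, ?_, ?_⟩
  · rw [← hN1, Submodule.finrank_map_subtype_eq]
  · intro y hy
    have hy2 : y = (y.comap H.subtype).map H.subtype := by
      rw [Submodule.map_comap_subtype, inf_eq_right.2 hy]
    have h1 : y ≤ N.map H.subtype ↔ y.comap H.subtype ≤ N := by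
      conv_lhs => rw [hy2]
      exact Submodule.map_le_map_iff_of_injective H.injective_subtype _ _
    rw [h1, hN2]
    constructor
    · intro h k hk
      have := h ⟨k.1 u0 - u0, G_diff_mem S k⟩ hk
      rwa [hψa, hTk] at this
    · intro h m hm
      rw [hψa]
      apply h
      rw [hTu]
      exact hm

theorem exists_setup (u : Submodule F (Fin n → F)) (hH : finrank F H + 1 = n)
    (hu : finrank F ↥(H ⊓ u) = 0) (hu1 : finrank F u = 1) :
    ∃ f u0, HypSetup H f u0 ∧ u = Submodule.span F {u0} := by
  obtain ⟨w, hw, hw0⟩ := (Submodule.ne_bot_iff u).1 (by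
    rintro rfl
    rw [finrank_bot] at hu1
    exact zero_ne_one hu1)
  have hspan : u = Submodule.span F {w} := by
    symm
    apply Submodule.eq_of_le_of_finrank_eq
    · rw [Submodule.span_singleton_le_iff_mem]; exact hw
    · rw [finrank_span_singleton hw0, hu1]
  have hwH : w ∉ H := by
    intro h
    rw [Submodule.finrank_eq_zero] at hu
    have : w ∈ H ⊓ u := ⟨h, hw⟩
    rw [hu] at this
    exact hw0 (by simpa using this)
  obtain ⟨f, hf1, hf2⟩ := Submodule.exists_le_ker_of_notMem hwH
  refine ⟨(f w)⁻¹ • f, w, ⟨?_, ?_⟩, hspan⟩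
  · have hk : H = LinearMap.ker f := by
      apply Submodule.eq_of_le_of_finrank_le hf2
      have h1 := Submodule.finrank_sup_span_singleton (p := LinearMap.ker f) (v := w)
        (by simpa using hf1)
      have h2 := Submodule.finrank_le (LinearMap.ker f ⊔ Submodule.span F {w})
      rw [Module.finrank_fin_fun] at h2
      omega
    intro v
    rw [hk, LinearMap.mem_ker]
    simp [hf1]
  · simp [hf1]

open Classical in
theorem Estar_zero (x : Submodule F (Fin n → F)) (i j : ℤ)
    (m : Submodule F (Fin n → F) → ℂ) (hm : m ∈ Mcomp F n H χ {y | ¬ y ≤ H}) :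
    (EstarT F n x H i j 0).mulVec m = 0 := by
  funext z
  unfold EstarT
  rw [Matrix.mulVec_diagonal]
  split_ifs with h
  · have hz : z ≤ H := by
      apply le_of_finrank_inf
      obtain ⟨_, h4, h5⟩ := h
      omega
    rw [hm.1 z (by simpa using hz), mul_zero]; rfl
  · rw [zero_mul]; rfl

end Helpers

open Classical in
/-- for a character `χ ≠ 1_G` with `χ|_K = 1_K` there is a
unique `H_χ ∈ P̃_{a,b-1,0}` supporting `Θ_χ`; moreover `Θ_χ` maps
`ℂP(x,H_χ)` bijectively onto `M(χ)` and the stated commutation identities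
hold on `ℂP(x,H_χ)`. -/
theorem Theta_iso_K_trivial (F : Type) [Field F] [Fintype F] (a b : ℕ)
    (x H : Submodule F (Fin (a + b + 1) → F))
    (hx : finrank F x = a) (hH : finrank F H = a + b) (hxH : x ≤ H)
    [Fintype (Gsub F (a + b + 1) H)]
    (u : Submodule F (Fin (a + b + 1) → F))
    (hu : finrank F ↥(x ⊓ u) = 0 ∧ finrank F ↥(H ⊓ u) = 0 ∧ finrank F u = 1)
    (χ : Gsub F (a + b + 1) H →* ℂ) (hχ1 : χ ≠ 1)
    (hχK : ∀ g : Gsub F (a + b + 1) H, memK F (a + b + 1) x g → χ g = 1) :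
    (∃! Hχ : Submodule F (Fin (a + b + 1) → F),
      PtMem F (a + b + 1) x H (a : ℤ) ((b : ℤ) - 1) 0 Hχ ∧
      ∀ y : Submodule F (Fin (a + b + 1) → F), y ≤ H →
        (echi F (a + b + 1) H χ (delta F (a + b + 1) (y ⊔ u)) ≠ 0 ↔ y ≤ Hχ))
    ∧ ∀ Hχ : Submodule F (Fin (a + b + 1) → F),
        PtMem F (a + b + 1) x H (a : ℤ) ((b : ℤ) - 1) 0 Hχ →
        (∀ y : Submodule F (Fin (a + b + 1) → F), y ≤ H →
          (echi F (a + b + 1) H χ (delta F (a + b + 1) (y ⊔ u)) ≠ 0 ↔ y ≤ Hχ)) →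
        ((∀ v w : Submodule F (Fin (a + b + 1) → F) → ℂ,
            (∀ y, ¬y ≤ Hχ → v y = 0) → (∀ y, ¬y ≤ Hχ → w y = 0) →
            (Theta F (a + b + 1) H χ u).mulVec v = (Theta F (a + b + 1) H χ u).mulVec w →
            v = w)
        ∧ (∀ v : Submodule F (Fin (a + b + 1) → F) → ℂ, (∀ y, ¬y ≤ Hχ → v y = 0) →
            (Theta F (a + b + 1) H χ u).mulVec v ∈ Mcomp F (a + b + 1) H χ {y | ¬y ≤ H})
        ∧ (∀ m ∈ Mcomp F (a + b + 1) H χ {y | ¬y ≤ H},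
            ∃ v : Submodule F (Fin (a + b + 1) → F) → ℂ,
              (∀ y, ¬y ≤ Hχ → v y = 0) ∧ (Theta F (a + b + 1) H χ u).mulVec v = m)
        ∧ ∀ v : Submodule F (Fin (a + b + 1) → F) → ℂ, (∀ y, ¬y ≤ Hχ → v y = 0) →
            ((LoneT F (a + b + 1) x H).mulVec ((Theta F (a + b + 1) H χ u).mulVec v)
                = (Fintype.card F : ℂ) •
                    (Theta F (a + b + 1) H χ u).mulVec ((LoneRel F (a + b + 1) x Hχ).mulVec v))
            ∧ ((LtwoT F (a + b + 1) x H).mulVec ((Theta F (a + b + 1) H χ u).mulVec v)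
                = (Fintype.card F : ℂ) •
                    (Theta F (a + b + 1) H χ u).mulVec ((LtwoRel F (a + b + 1) x Hχ).mulVec v))
            ∧ ((LthreeT F (a + b + 1) x H).mulVec ((Theta F (a + b + 1) H χ u).mulVec v) = 0)
            ∧ ((RoneT F (a + b + 1) x H).mulVec ((Theta F (a + b + 1) H χ u).mulVec v)
                = (Theta F (a + b + 1) H χ u).mulVec ((RoneRel F (a + b + 1) x Hχ).mulVec v))
            ∧ ((RtwoT F (a + b + 1) x H).mulVec ((Theta F (a + b + 1) H χ u).mulVec v)
                = (Theta F (a + b + 1) H χ u).mulVec ((RtwoRel F (a + b + 1) x Hχ).mulVec v))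
            ∧ ((RthreeT F (a + b + 1) x H).mulVec ((Theta F (a + b + 1) H χ u).mulVec v) = 0)
            ∧ (∀ i j : ℕ, i ≤ a → j < b →
                (EstarT F (a + b + 1) x H i j 0).mulVec
                    ((Theta F (a + b + 1) H χ u).mulVec v) = 0)
            ∧ (∀ i : ℕ, i ≤ a →
                (EstarT F (a + b + 1) x H i b 0).mulVec
                    ((Theta F (a + b + 1) H χ u).mulVec v) = 0)
            ∧ (∀ i : ℕ, i ≤ a →
                (EstarT F (a + b + 1) x H i b 1).mulVec
                    ((Theta F (a + b + 1) H χ u).mulVec v) = 0)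
            ∧ (∀ i j : ℕ, i ≤ a → j < b →
                (EstarT F (a + b + 1) x H i j 1).mulVec
                    ((Theta F (a + b + 1) H χ u).mulVec v)
                  = (Theta F (a + b + 1) H χ u).mulVec
                      ((EstarRel F (a + b + 1) x Hχ i j).mulVec v))) := by
  obtain ⟨f, u0, S, rfl⟩ := exists_setup (H := H) u (by rw [hH]) hu.2.1 hu.2.2
  obtain ⟨N, hNH, hNr, hP⟩ := exists_Hχ S hχ1
  have hxN : x ≤ N := by
    rw [hP x hxH]
    intro k hk
    apply hχK
    intro v
    rw [G_apply S k v]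
    simpa using x.smul_mem (f v) hk
  have hiff : ∀ y : Submodule F (Fin (a + b + 1) → F), y ≤ H →
        (echi F (a + b + 1) H χ (delta F (a + b + 1) (y ⊔ Submodule.span F {u0})) ≠ 0 ↔ y ≤ N) :=
    fun y hy => echi_ne_zero_iff S hNH hP hy
  have huniq : ∀ Hχ : Submodule F (Fin (a + b + 1) → F),
      PtMem F (a + b + 1) x H (a : ℤ) ((b : ℤ) - 1) 0 Hχ →
      (∀ y : Submodule F (Fin (a + b + 1) → F), y ≤ H →
        (echi F (a + b + 1) H χ (delta F (a + b + 1) (y ⊔ Submodule.span F {u0})) ≠ 0 ↔ y ≤ Hχ)) →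
      Hχ = N := by
    intro Hχ h1 h2
    have h3 : Hχ ≤ H := by
      apply le_of_finrank_inf
      obtain ⟨_, h4, h5⟩ := h1
      omega
    apply le_antisymm
    · exact (hiff _ h3).1 ((h2 _ h3).2 le_rfl)
    · exact (h2 _ hNH).1 ((hiff _ hNH).2 le_rfl)
  constructor
  · refine ⟨N, ⟨⟨?_, ?_, ?_⟩, hiff⟩, fun Hχ h => huniq Hχ h.1 h.2⟩
    · rw [inf_eq_left.2 hxN, hx]
    · rw [inf_eq_right.2 hNH]; omega
    · omega
  intro Hχ hm1 hm2
  obtain rfl := huniq Hχ hm1 hm2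
  refine ⟨fun v w hv hw h => theta_inj S hNH hP v w hv hw h, fun v _ => theta_mem S v,
    fun m hm => theta_surj S hP m hm, ?_⟩
  intro v hv
  have hmem := theta_mem (χ := χ) S v
  refine ⟨?_, ?_, L3_zero S hχ1 hxH _ hmem, ?_, ?_, R3_zero S x _ hmem, ?_, ?_, ?_, ?_⟩
  · rw [LoneT_eq, LoneRel_eq]; exact L_comm S hNH hP hxH _ v hv
  · rw [LtwoT_eq, LtwoRel_eq]; exact L_comm S hNH hP hxH _ v hv
  · rw [RoneT_eq, RoneRel_eq]; exact R_comm S hP hxH _ v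
  · rw [RtwoT_eq, RtwoRel_eq]; exact R_comm S hP hxH _ v
  · intro i j _ _
    exact Estar_zero _ _ _ _ hmem
  · intro i _
    exact Estar_zero _ _ _ _ hmem
  · intro i _
    funext z
    unfold EstarT
    rw [Matrix.mulVec_diagonal]
    split_ifs with h
    · rw [theta_mulVec S, hv, mul_zero, mul_zero]
      · rfl
      intro hle
      obtain ⟨h1, h2, h3⟩ := h
      have h4 := Submodule.finrank_sup_add_finrank_inf_eq x (H ⊓ z)
      rw [x_inf_H hxH] at h4
      have h5 := Submodule.finrank_mono (sup_le hxN hle)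
      omega
    · rw [zero_mul]; rfl
  · intro i j _ _
    funext z
    unfold EstarT EstarRel
    rw [Matrix.mulVec_diagonal, theta_mulVec S, theta_mulVec S, Matrix.mulVec_diagonal]
    by_cases hz : z ≤ H
    · rw [cSum_of_le S hz]; simp
    by_cases hz2 : H ⊓ z ≤ Hχ
    · have h1 := finrank_not_le S hz
      have h2 : PtMem F (a + b + 1) x H (i : ℤ) (j : ℤ) 1 z ↔ H ⊓ z ≤ Hχ ∧
          (finrank F ↥(x ⊓ (H ⊓ z)) : ℤ) = i ∧ (finrank F ↥(H ⊓ z) : ℤ) = i + j := by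
        rw [x_inf_H hxH]
        unfold PtMem
        constructor
        · rintro ⟨e1, e2, e3⟩
          exact ⟨hz2, e1, e2⟩
        · rintro ⟨_, e1, e2⟩
          exact ⟨e1, e2, by omega⟩
      by_cases h3 : PtMem F (a + b + 1) x H (i : ℤ) (j : ℤ) 1 z
      · rw [if_pos h3, if_pos (h2.1 h3)]; ring
      · rw [if_neg h3, if_neg (fun h => h3 (h2.2 h))]; ring
    · rw [cSum_zero_of_not_le S hP hz2]; simp
end

section
/- Let (h, r, s, λ₀) be admissible parameters. Then the characteristic polynomial of A(q,d;h,r,s,λ₀) equals ∏_{i=0}^{d} (X − λ_i), where λ_i = λ₀ + h(1−q^i)(1−sq^{i+1})q^{−i} for 0 ≤ i ≤ d; that is, the eigenvalues of A(q,d;h,r,s,λ₀) are λ₀, λ₁, …, λ_d. In particular, for fixed h, s, λ₀, the matrices A(q,d;h,r,s,λ₀) for distinct admissible values of r are all similar. -/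
/-- The off-diagonal entry `b_i = h(1-q^{i-d})(1-rq^{i+1})`. -/
noncomputable def bEnt (q : ℂ) (d : ℕ) (h r : ℂ) (i : ℕ) : ℂ :=
  h * (1 - q ^ ((i : ℤ) - (d : ℤ))) * (1 - r * q ^ (i + 1))

/-- The off-diagonal entry `c_i = hsq(1-q^i)(1-rq^{i-d-1}/s)`. -/
noncomputable def cEnt (q : ℂ) (d : ℕ) (h r s : ℂ) (i : ℕ) : ℂ :=
  h * s * q * (1 - q ^ i) * (1 - r * q ^ ((i : ℤ) - (d : ℤ) - 1) / s)

/-- The `(d+1) × (d+1)` tridiagonal matrix `A(q,d;h,r,s,λ₀)`: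
superdiagonal entries `b_i`, subdiagonal entries `c_i`, and diagonal entries
`a_i = λ₀ - b_i - c_i`. -/
noncomputable def stdMat (q : ℂ) (d : ℕ) (h r s lam0 : ℂ) :
    Matrix (Fin (d + 1)) (Fin (d + 1)) ℂ := fun i j =>
  if (j : ℕ) = (i : ℕ) + 1 then bEnt q d h r i
  else if (i : ℕ) = (j : ℕ) + 1 then cEnt q d h r s i
  else if i = j then lam0 - bEnt q d h r i - cEnt q d h r s i
  else 0

/-- Admissibility of the parameters `(h, r, s, λ₀)`:
`h, r, s ≠ 0`, `rq^i ≠ 1` and `sq^i/r ≠ 1` for `1 ≤ i ≤ d`, and `sq^i ≠ 1`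
for `2 ≤ i ≤ 2d`. -/
def Admissible (q : ℂ) (d : ℕ) (h r s : ℂ) : Prop :=
  h ≠ 0 ∧ r ≠ 0 ∧ s ≠ 0 ∧
    (∀ i : ℕ, 1 ≤ i → i ≤ d → r * q ^ i ≠ 1 ∧ s * q ^ i / r ≠ 1) ∧
    (∀ i : ℕ, 2 ≤ i → i ≤ 2 * d → s * q ^ i ≠ 1)


namespace StdMatAux

lemma band {n : ℕ} (m : ℤ) (c : ℂ) (f : ℤ → ℂ) (hc : (0 ≤ m ∧ m < n) ∨ c = 0) :
    ∑ j : Fin n, (if ((j : ℕ) : ℤ) = m then c else 0) * f ((j : ℕ) : ℤ) = c * f m := by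
  rcases hc with ⟨h0, h1⟩ | rfl
  · lift m to ℕ using h0
    have h1' : m < n := by exact_mod_cast h1
    rw [Finset.sum_eq_single (⟨m, h1'⟩ : Fin n)]
    · simp
    · intro b _ hb
      rw [if_neg, zero_mul]
      intro h
      apply hb
      ext
      exact_mod_cast h
    · simp
  · simp

/-- eigenvalues -/
noncomputable def lamv (q h s lam0 : ℂ) (k : ℕ) : ℂ :=
  lam0 + h * (1 - q ^ k) * (1 - s * q ^ (k + 1)) * q ^ (-(k : ℤ))

noncomputable def bet (q : ℂ) (d : ℕ) (h r s : ℂ) (k : ℕ) : ℂ :=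
  -h * ((q ^ (-(d : ℤ)) + r * q) * ((q ^ k)⁻¹ - 1)
    + (s * q + r * q ^ (-(d : ℤ))) * (q ^ k - 1))

noncomputable def gam (q : ℂ) (d : ℕ) (h r : ℂ) (k : ℕ) : ℂ :=
  h * r * q ^ (-(d : ℤ)) * (q * ((q ^ k)⁻¹ - 1) + (q ^ k - 1))

noncomputable def T (q : ℂ) (d : ℕ) (h r s lam0 : ℂ) :
    Matrix (Fin (d + 1)) (Fin (d + 1)) ℂ := fun j k =>
  (if ((j : ℕ) : ℤ) = (k : ℕ) then lamv q h s lam0 k else 0)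
  + (if ((j : ℕ) : ℤ) = (k : ℕ) - 1 then bet q d h r s k else 0)
  + (if ((j : ℕ) : ℤ) = (k : ℕ) - 2 then gam q d h r k else 0)

noncomputable def V (q : ℂ) (d : ℕ) : Matrix (Fin (d + 1)) (Fin (d + 1)) ℂ := fun i k =>
  q ^ (-(((i : ℕ) : ℤ) * ((k : ℕ) : ℤ)))

lemma stdMat_eq (q : ℂ) (d : ℕ) (h r s lam0 : ℂ) (i j : Fin (d + 1)) :
    stdMat q d h r s lam0 i j =
      (if ((j : ℕ) : ℤ) = (i : ℕ) + 1 then bEnt q d h r i else 0)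
      + (if ((j : ℕ) : ℤ) = (i : ℕ) - 1 then cEnt q d h r s i else 0)
      + (if ((j : ℕ) : ℤ) = (i : ℕ) then lam0 - bEnt q d h r i - cEnt q d h r s i else 0) := by
  unfold stdMat
  simp only [Fin.ext_iff]
  by_cases h1 : (j : ℕ) = (i : ℕ) + 1
  · rw [if_pos h1, if_pos (by omega), if_neg (by omega), if_neg (by omega)]; ring
  by_cases h2 : (i : ℕ) = (j : ℕ) + 1
  · rw [if_neg h1, if_pos h2, if_neg (by omega), if_pos (by omega), if_neg (by omega)]; ring
  by_cases h3 : (i : ℕ) = (j : ℕ)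
  · rw [if_neg h1, if_neg h2, if_pos h3, if_neg (by omega), if_neg (by omega),
      if_pos (by omega)]; ring
  · rw [if_neg h1, if_neg h2, if_neg h3, if_neg (by omega), if_neg (by omega),
      if_neg (by omega)]; ring

lemma AV_eq (q : ℂ) (hq : q ≠ 0) (d : ℕ) (h r s lam0 : ℂ) (hs : s ≠ 0) :
    stdMat q d h r s lam0 * V q d = V q d * T q d h r s lam0 := by
  ext i k
  have hi := i.2
  have hk := k.2
  rw [Matrix.mul_apply, Matrix.mul_apply]
  have hL : ∑ j, stdMat q d h r s lam0 i j * V q d j k =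
      bEnt q d h r i * q ^ (-((((i : ℕ) : ℤ) + 1) * ((k : ℕ) : ℤ)))
      + cEnt q d h r s i * q ^ (-((((i : ℕ) : ℤ) - 1) * ((k : ℕ) : ℤ)))
      + (lam0 - bEnt q d h r i - cEnt q d h r s i)
        * q ^ (-(((i : ℕ) : ℤ) * ((k : ℕ) : ℤ))) := by
    simp only [stdMat_eq, add_mul, Finset.sum_add_distrib, V]
    let f : ℤ → ℂ := fun z => q ^ (-(z * ((k : ℕ) : ℤ)))
    congr 1
    · congr 1
      · refine (band (n := d + 1) (((i : ℕ) : ℤ) + 1) (bEnt q d h r i) f ?_).trans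
          (by simp only [f, add_mul])
        by_cases hd : (i : ℕ) = d
        · right; simp [bEnt, hd]
        · left; constructor <;> push_cast <;> omega
      · refine band (n := d + 1) _ _ f ?_
        by_cases hd : (i : ℕ) = 0
        · right; simp [cEnt, hd]
        · left; constructor <;> push_cast <;> omega
    · refine band (n := d + 1) _ _ f ?_
      left; constructor <;> push_cast <;> omega
  have hR : ∑ j, V q d i j * T q d h r s lam0 j k =
      lamv q h s lam0 k * q ^ (-(((i : ℕ) : ℤ) * ((k : ℕ) : ℤ)))
      + bet q d h r s k * q ^ (-(((i : ℕ) : ℤ) * (((k : ℕ) : ℤ) - 1)))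
      + gam q d h r k * q ^ (-(((i : ℕ) : ℤ) * (((k : ℕ) : ℤ) - 2))) := by
    simp only [mul_comm (V q d i _)]
    simp only [T, add_mul, Finset.sum_add_distrib, V]
    let f : ℤ → ℂ := fun z => q ^ (-(((i : ℕ) : ℤ) * z))
    congr 1
    · congr 1
      · refine band (n := d + 1) _ _ f ?_
        left; constructor <;> push_cast <;> omega
      · refine band (n := d + 1) _ _ f ?_
        by_cases hd : (k : ℕ) = 0
        · right; simp [bet, hd]
        · left; constructor <;> push_cast <;> omega
    · refine band (n := d + 1) _ _ f ?_
      by_cases hd : (k : ℕ) = 0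
      · right; simp [gam, hd]
      by_cases hd1 : (k : ℕ) = 1
      · right; simp only [gam, hd1]; field_simp; ring
      · left; constructor <;> push_cast <;> omega
  rw [hL, hR]
  generalize (i : ℕ) = a
  generalize (k : ℕ) = b
  have e1 : q ^ (-(((a : ℤ) + 1) * (b : ℤ))) = q ^ (-((a : ℤ) * b)) * (q ^ b)⁻¹ := by
    rw [← zpow_natCast q b, ← zpow_neg, ← zpow_add₀ hq]; congr 1; ring
  have e2 : q ^ (-(((a : ℤ) - 1) * (b : ℤ))) = q ^ (-((a : ℤ) * b)) * (q ^ b) := by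
    rw [← zpow_natCast q b, ← zpow_add₀ hq]; congr 1; ring
  have e3 : q ^ (-((a : ℤ) * ((b : ℤ) - 1))) = q ^ (-((a : ℤ) * b)) * (q ^ a) := by
    rw [← zpow_natCast q a, ← zpow_add₀ hq]; congr 1; ring
  have e4 : q ^ (-((a : ℤ) * ((b : ℤ) - 2))) = q ^ (-((a : ℤ) * b)) * (q ^ a * q ^ a) := by
    rw [← zpow_natCast q a, ← zpow_add₀ hq, ← zpow_add₀ hq]; congr 1; ring
  have e5 : q ^ ((a : ℤ) - d) = q ^ a * q ^ (-(d : ℤ)) := by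
    rw [← zpow_natCast q a, ← zpow_add₀ hq]; congr 1
  have e6 : q ^ ((a : ℤ) - d - 1) = q ^ a * q ^ (-(d : ℤ)) * q⁻¹ := by
    rw [← zpow_natCast q a, ← zpow_neg_one, ← zpow_add₀ hq, ← zpow_add₀ hq]; congr 1
  have e7 : q ^ (-(b : ℤ)) = (q ^ b)⁻¹ := by rw [zpow_neg, zpow_natCast]
  have hb : q ^ b ≠ 0 := pow_ne_zero _ hq
  rw [e1, e2, e3, e4]
  simp only [bEnt, cEnt, lamv, bet, gam, e5, e6, e7, pow_succ]
  generalize q ^ (-((a : ℤ) * b)) = g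
  generalize q ^ a = x at *
  generalize q ^ b = y at *
  generalize q ^ (-(d : ℤ)) = w
  field_simp
  ring

open Polynomial in
lemma charpoly_eq (q : ℂ) (hq : q ≠ 0) (hinj : Function.Injective (fun n : ℕ => q ^ n))
    (d : ℕ) (h r s lam0 : ℂ) (hs : s ≠ 0) :
    (stdMat q d h r s lam0).charpoly =
      ∏ i ∈ Finset.range (d + 1), (X - C (lamv q h s lam0 i)) := by
  have hV : IsUnit (V q d) := by
    have : V q d = Matrix.vandermonde (fun i : Fin (d + 1) => (q ^ (i : ℕ))⁻¹) := by
      ext i k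
      simp only [V, Matrix.vandermonde_apply]
      rw [zpow_neg, zpow_mul, zpow_natCast, zpow_natCast, inv_pow]
    rw [Matrix.isUnit_iff_isUnit_det, isUnit_iff_ne_zero, this, Matrix.det_vandermonde_ne_zero_iff]
    intro i j hij
    exact Fin.ext (hinj (inv_injective hij))
  have hA := AV_eq q hq d h r s lam0 hs
  obtain ⟨u, hu⟩ := hV
  have h2 : stdMat q d h r s lam0 = u.val * T q d h r s lam0 * (↑u⁻¹ : Matrix (Fin (d + 1)) (Fin (d + 1)) ℂ) := by
    rw [hu, ← hA, ← hu, mul_assoc, Units.mul_inv, mul_one]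
  have h3 : (stdMat q d h r s lam0).charpoly = (T q d h r s lam0).charpoly := by
    rw [h2, Matrix.coe_units_inv, Matrix.charpoly_units_conj]
  rw [h3, Matrix.charpoly_of_upperTriangular, ← Fin.prod_univ_eq_prod_range
    (fun i => (X - C (lamv q h s lam0 i)))]
  · apply Finset.prod_congr rfl
    intro i _
    congr 2
    simp only [T]
    rw [if_pos trivial, if_neg (by omega), if_neg (by omega), add_zero, add_zero]
  · intro i j hij
    have : (j : ℕ) < i := hij
    simp only [T]
    rw [if_neg (by omega), if_neg (by omega), if_neg (by omega)]; ring

open Polynomial in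
lemma diag_of_charpoly {n : ℕ} (M : Matrix (Fin n) (Fin n) ℂ) (μ : ℕ → ℂ)
    (hμ : Function.Injective (fun i : Fin n => μ i))
    (hM : M.charpoly = ∏ i ∈ Finset.range n, (X - C (μ i))) :
    ∃ P : Matrix (Fin n) (Fin n) ℂ, IsUnit P ∧
      M * P = P * Matrix.diagonal (fun i : Fin n => μ i) := by
  have hv : ∀ i : Fin n, ∃ v : Fin n → ℂ, Module.End.HasEigenvector (Matrix.toLin' M) (μ i) v := by
    intro i
    have hroot : M.charpoly.eval (μ i) = 0 := by
      rw [hM, eval_prod]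
      exact Finset.prod_eq_zero (Finset.mem_range.2 i.2) (by simp)
    rw [Matrix.eval_charpoly] at hroot
    obtain ⟨v, hv0, hv⟩ := Matrix.exists_mulVec_eq_zero_iff.2 hroot
    refine ⟨v, Module.End.mem_eigenspace_iff.2 ?_, hv0⟩
    rw [Matrix.sub_mulVec, sub_eq_zero] at hv
    rw [Matrix.toLin'_apply, ← hv]
    simp [Matrix.scalar_apply, ← Matrix.smul_one_eq_diagonal, Matrix.smul_mulVec]
  choose v hv using hv
  have hli := Module.End.eigenvectors_linearIndependent' (Matrix.toLin' M)
    (fun i : Fin n => μ i) hμ v hv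
  refine ⟨(Matrix.of v).transpose, ?_, ?_⟩
  · rw [← Matrix.linearIndependent_cols_iff_isUnit]
    exact hli
  · ext i k
    have := congrFun (hv k).apply_eq_smul i
    rw [Matrix.mul_diagonal, Matrix.mul_apply]
    simp only [Matrix.toLin'_apply, Matrix.mulVec, dotProduct, Pi.smul_apply, smul_eq_mul] at this
    simp only [Matrix.transpose_apply, Matrix.of_apply]
    rw [this, mul_comm]

lemma lamv_inj (q : ℂ) (hq : q ≠ 0) (hinj : Function.Injective (fun n : ℕ => q ^ n))
    (d : ℕ) (h s lam0 : ℂ) (hh : h ≠ 0)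
    (hs : ∀ i : ℕ, 2 ≤ i → i ≤ 2 * d → s * q ^ i ≠ 1) :
    Function.Injective (fun i : Fin (d + 1) => lamv q h s lam0 i) := by
  intro i j hij
  by_contra hne
  have hne' : (i : ℕ) ≠ j := fun h => hne (Fin.ext h)
  have hi := i.2
  have hj := j.2
  have h1 : s * q ^ ((i : ℕ) + j + 1) ≠ 1 := hs _ (by omega) (by omega)
  have h2 : q ^ (i : ℕ) ≠ q ^ (j : ℕ) := fun h => hne' (hinj h)
  simp only [lamv, zpow_neg, zpow_natCast, pow_succ, pow_add] at hij h1
  have hx : q ^ (i : ℕ) ≠ 0 := pow_ne_zero _ hq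
  have hy : q ^ (j : ℕ) ≠ 0 := pow_ne_zero _ hq
  generalize q ^ (i : ℕ) = x at *
  generalize q ^ (j : ℕ) = y at *
  have h3 : h * (y - x) * (1 - s * (x * y * q)) = 0 := by
    have hij' := add_left_cancel hij
    field_simp at hij'
    first
      | linear_combination hij'
      | linear_combination h * hij'
  rcases mul_eq_zero.1 h3 with h4 | h4
  · rcases mul_eq_zero.1 h4 with h5 | h5
    · exact hh h5
    · exact h2 (sub_eq_zero.1 h5).symm
  · exact h1 (sub_eq_zero.1 h4).symm

end StdMatAux

open Polynomial in
/-- the characteristic polynomial of `A(q,d;h,r,s,λ₀)` is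
`∏_{i=0}^{d} (X - λ_i)` with `λ_i = λ₀ + h(1-q^i)(1-sq^{i+1})q^{-i}`; in
particular, for fixed `h, s, λ₀` the matrices for distinct admissible values
of `r` are all similar. -/
theorem charpoly_stdMat (q : ℕ) (hq : IsPrimePow q) (d : ℕ) (h r s lam0 : ℂ)
    (hadm : Admissible (q : ℂ) d h r s) :
    (stdMat (q : ℂ) d h r s lam0).charpoly
        = ∏ i ∈ Finset.range (d + 1),
            (X - C (lam0 + h * (1 - (q : ℂ) ^ i) * (1 - s * (q : ℂ) ^ (i + 1))
              * (q : ℂ) ^ (-(i : ℤ))))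
      ∧ ∀ r' : ℂ, Admissible (q : ℂ) d h r' s →
          ∃ S : Matrix (Fin (d + 1)) (Fin (d + 1)) ℂ, IsUnit S ∧
            S⁻¹ * stdMat (q : ℂ) d h r s lam0 * S = stdMat (q : ℂ) d h r' s lam0 := by

  have hq2 : 1 < q := hq.one_lt
  have hq0 : (q : ℂ) ≠ 0 := by
    exact_mod_cast (by omega : q ≠ 0)
  have hinj : Function.Injective (fun n : ℕ => (q : ℂ) ^ n) := by
    intro a b hab
    have : q ^ a = q ^ b := by
      have hab' : (q : ℂ) ^ a = (q : ℂ) ^ b := hab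
      exact_mod_cast hab'
    exact Nat.pow_right_injective hq2 this
  obtain ⟨hh, hr, hs, -, hs2⟩ := hadm
  refine ⟨StdMatAux.charpoly_eq _ hq0 hinj d h r s lam0 hs, ?_⟩
  intro r' _
  have hl := StdMatAux.lamv_inj _ hq0 hinj d h s lam0 hh hs2
  obtain ⟨P, hP, hP2⟩ := StdMatAux.diag_of_charpoly _ _ hl
    (StdMatAux.charpoly_eq _ hq0 hinj d h r s lam0 hs)
  obtain ⟨R, hR, hR2⟩ := StdMatAux.diag_of_charpoly _ _ hl
    (StdMatAux.charpoly_eq _ hq0 hinj d h r' s lam0 hs)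
  have hPd := (Matrix.isUnit_iff_isUnit_det _).1 hP
  have hRd := (Matrix.isUnit_iff_isUnit_det _).1 hR
  have hS : IsUnit (P * R⁻¹) := hP.mul ((Matrix.isUnit_nonsing_inv_iff).2 hR)
  refine ⟨P * R⁻¹, hS, ?_⟩
  have key : stdMat (q : ℂ) d h r s lam0 * (P * R⁻¹)
      = (P * R⁻¹) * stdMat (q : ℂ) d h r' s lam0 := by
    have e : stdMat (q : ℂ) d h r' s lam0
        = R * Matrix.diagonal (fun i : Fin (d + 1) => StdMatAux.lamv q h s lam0 i) * R⁻¹ := by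
      rw [← hR2, Matrix.mul_assoc, Matrix.mul_nonsing_inv _ hRd, Matrix.mul_one]
    rw [← Matrix.mul_assoc, hP2, e, Matrix.mul_assoc P R⁻¹, ← Matrix.mul_assoc R⁻¹,
      ← Matrix.mul_assoc R⁻¹, Matrix.nonsing_inv_mul _ hRd, Matrix.one_mul, Matrix.mul_assoc]
  rw [Matrix.mul_assoc, key, ← Matrix.mul_assoc,
    Matrix.nonsing_inv_mul _ ((Matrix.isUnit_iff_isUnit_det _).1 hS), Matrix.one_mul]
end
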